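/- arXiv:1503.03947 — 2 statements merged into one kernel-verified Lean document; each statement's English description precedes it below -/
import Mathlib

section
/- Two frames {φ_i}_{i=1}^∞ and {ψ_i}_{i=1}^∞ for a separable Hilbert space H are woven if and only if they are weakly woven; that is, if for every σ ⊆ ℕ the family {φ_i}_{i∈σ} ∪ {ψ_i}_{i∈σ^c} is a frame for H, then there exist universal constants 0 < A ≤ B such that every such weaving is a frame with bounds A and B. -/
open scoped RealInnerProductSpace BigOperators Classical

/-!
Selections `s : ι → κ` from finitely many families form a compact space. By the Baire category
theorem, some constant `c > 0` is a lower frame bound for all selections agreeing with a selection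
`t` on a finite set `I`. Overwriting an arbitrary selection `s` by `t` on `I` changes its frame sum
`S s f` by a finite sum at most, so `c * ‖f‖ ^ p ≤ S s f + F f` with `F f` the sum over `I` of the
terms selected by `t`. Let `‖f‖ = 1`. Either `S s f ≥ c / 2`, or `f` lies in the weak-* compact set
`{‖f‖ ≤ 1, F f ≥ c / 2}`, which omits `0`; the frame sum is positive and jointly lower
semicontinuous in `f` and `s` there, hence attains a positive minimum.
-/

open Function Set

section SemicontinuousSums

variable {X ι : Type*} [TopologicalSpace X]

theorem lowerSemicontinuous_tsum_of_nonneg {g : ι → X → ℝ} (hg : ∀ i, LowerSemicontinuous (g i))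
    (hnonneg : ∀ i x, 0 ≤ g i x) (hsum : ∀ x, Summable fun i => g i x) :
    LowerSemicontinuous fun x => ∑' i, g i x := by
  intro x y hy
  obtain ⟨I, hI⟩ := ((hsum x).hasSum.eventually (lt_mem_nhds hy)).exists
  filter_upwards [lowerSemicontinuous_sum (a := I) (fun i _ => hg i) x y hI] with z hz
  exact hz.trans_le ((hsum z).sum_le_tsum I fun i _ => hnonneg i z)

theorem exists_pos_forall_le_of_isCompact_of_lowerSemicontinuous {K : Set X} {g : X → ℝ}
    (hK : IsCompact K) (hg : LowerSemicontinuous g) (hpos : ∀ x ∈ K, 0 < g x) :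
    ∃ m > 0, ∀ x ∈ K, m ≤ g x := by
  rcases K.eq_empty_or_nonempty with rfl | hne
  · exact ⟨1, one_pos, by simp⟩
  · obtain ⟨x, hx, hmin⟩ := (hg.lowerSemicontinuousOn K).exists_isMinOn hne hK
    exact ⟨g x, hpos x hx, hmin⟩

end SemicontinuousSums

theorem tsum_piecewise_le {ι : Type*} {u v : ι → ℝ} (hv : ∀ i, 0 ≤ v i) (hsum : Summable v)
    (I : Finset ι) : ∑' i, I.piecewise u v i ≤ ∑' i, v i + ∑ i ∈ I, u i := by
  have hpiecewise : Summable (I.piecewise u v) :=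
    (summable_congr_cofinite (I.eventually_cofinite_notMem.mono fun i hi => by simp [hi])).mpr hsum
  calc ∑' i, I.piecewise u v i
      = ∑ i ∈ I, I.piecewise u v i + ∑' i : {i // i ∉ I}, I.piecewise u v i :=
        (hpiecewise.sum_add_tsum_subtype_compl I).symm
    _ = ∑ i ∈ I, u i + ∑' i : {i // i ∉ I}, v i := by
        congr 1
        · exact Finset.sum_congr rfl fun i hi => I.piecewise_eq_of_mem u v hi
        · exact tsum_congr fun i => I.piecewise_eq_of_notMem u v i.2
    _ ≤ ∑ i ∈ I, u i + ∑' i, v i := by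
        gcongr
        exact hsum.tsum_subtype_le _ {i | i ∉ I} hv
    _ = ∑' i, v i + ∑ i ∈ I, u i := add_comm _ _

section Selections

variable {ι κ : Type*}

theorem apply_selection_le_sum [Fintype κ] {a : ι → κ → ℝ} (ha : ∀ i k, 0 ≤ a i k) (s : ι → κ)
    (i : ι) : a i (s i) ≤ ∑ k, a i k :=
  Finset.single_le_sum (fun k _ => ha i k) (Finset.mem_univ (s i))

theorem summable_selection [Finite κ] {a : ι → κ → ℝ} (ha : ∀ i k, 0 ≤ a i k)
    (hsum : ∀ k, Summable fun i => a i k) (s : ι → κ) : Summable fun i => a i (s i) := by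
  cases nonempty_fintype κ
  exact .of_nonneg_of_le (fun i => ha i (s i)) (apply_selection_le_sum ha s)
    (summable_sum fun k _ => hsum k)

theorem tsum_selection_le [Fintype κ] {a : ι → κ → ℝ} (ha : ∀ i k, 0 ≤ a i k)
    (hsum : ∀ k, Summable fun i => a i k) (s : ι → κ) :
    ∑' i, a i (s i) ≤ ∑ k, ∑' i, a i k :=
  calc ∑' i, a i (s i) ≤ ∑' i, ∑ k, a i k :=
        (summable_selection ha hsum s).tsum_le_tsum (apply_selection_le_sum ha s)
          (summable_sum fun k _ => hsum k)
    _ = ∑ k, ∑' i, a i k := Summable.tsum_finsetSum fun k _ => hsum k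

theorem continuous_tsum_selection [Finite κ] [TopologicalSpace κ] [DiscreteTopology κ]
    {a : ι → κ → ℝ} (ha : ∀ i k, 0 ≤ a i k) (hsum : ∀ k, Summable fun i => a i k) :
    Continuous fun s : ι → κ => ∑' i, a i (s i) := by
  cases nonempty_fintype κ
  refine continuous_tsum (u := fun i => ∑ k, a i k)
    (fun i => continuous_of_discreteTopology.comp (continuous_apply i))
    (summable_sum fun k _ => hsum k) fun i s => ?_
  rw [Real.norm_of_nonneg (ha i (s i))]
  exact apply_selection_le_sum ha s i

section LowerBounds

variable {X : Type*} [Finite κ] {a : X → ι → κ → ℝ}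

theorem exists_finset_forall_eqOn_lower_bound [Nonempty (ι → κ)] {N : X → ℝ}
    (ha : ∀ x i k, 0 ≤ a x i k) (hN : ∀ x, 0 ≤ N x) (hsum : ∀ x k, Summable fun i => a x i k)
    (h : ∀ s : ι → κ, ∃ A > 0, ∀ x, A * N x ≤ ∑' i, a x i (s i)) :
    ∃ (I : Finset ι) (t : ι → κ), ∃ c > 0, ∀ s : ι → κ, EqOn s t I →
      ∀ x, c * N x ≤ ∑' i, a x i (s i) := by
  let _ : TopologicalSpace κ := ⊥
  have : DiscreteTopology κ := ⟨rfl⟩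
  let lowerBounded (n : ℕ) : Set (ι → κ) := {s | ∀ x, 1 / ((n : ℝ) + 1) * N x ≤ ∑' i, a x i (s i)}
  have lowerBounded_isClosed (n : ℕ) : IsClosed (lowerBounded n) := by
    simp only [lowerBounded, ofPred_forall]
    exact isClosed_iInter fun x =>
      isClosed_le continuous_const (continuous_tsum_selection (ha x) (hsum x))
  have iUnion_lowerBounded : ⋃ n, lowerBounded n = univ := by
    refine iUnion_eq_univ_iff.mpr fun s => ?_
    obtain ⟨A, hA, hs⟩ := h s
    obtain ⟨n, hn⟩ := exists_nat_one_div_lt hA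
    exact ⟨n, fun x => (mul_le_mul_of_nonneg_right hn.le (hN x)).trans (hs x)⟩
  obtain ⟨n, t, ht⟩ :=
    nonempty_interior_of_iUnion_of_closed lowerBounded_isClosed iUnion_lowerBounded
  obtain ⟨I, U, hU, hsub⟩ := isOpen_pi_iff.mp isOpen_interior t ht
  refine ⟨I, t, 1 / ((n : ℝ) + 1), by positivity, fun s hs => interior_subset (hsub ?_)⟩
  exact fun i hi => (hs hi).symm ▸ (hU i hi).2

theorem exists_finset_lower_bound_add_sum [Nonempty (ι → κ)] {N : X → ℝ}
    (ha : ∀ x i k, 0 ≤ a x i k) (hN : ∀ x, 0 ≤ N x) (hsum : ∀ x k, Summable fun i => a x i k)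
    (h : ∀ s : ι → κ, ∃ A > 0, ∀ x, A * N x ≤ ∑' i, a x i (s i)) :
    ∃ (I : Finset ι) (t : ι → κ), ∃ c > 0, ∀ (s : ι → κ) (x : X),
      c * N x ≤ ∑' i, a x i (s i) + ∑ i ∈ I, a x i (t i) := by
  obtain ⟨I, t, c, hc, hI⟩ := exists_finset_forall_eqOn_lower_bound ha hN hsum h
  refine ⟨I, t, c, hc, fun s x => ?_⟩
  calc c * N x ≤ ∑' i, a x i (I.piecewise t s i) :=
        hI _ (fun i hi => I.piecewise_eq_of_mem t s hi) x
    _ = ∑' i, I.piecewise (fun i => a x i (t i)) (fun i => a x i (s i)) i :=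
        tsum_congr fun i => apply_ite (a x i) (i ∈ I) (t i) (s i)
    _ ≤ ∑' i, a x i (s i) + ∑ i ∈ I, a x i (t i) :=
        tsum_piecewise_le (fun i => ha x i (s i)) (summable_selection (ha x) (hsum x) s) I

theorem exists_pos_forall_le_tsum_selection_of_isCompact [TopologicalSpace X] {K : Set X}
    (hK : IsCompact K) (ha : ∀ x i k, 0 ≤ a x i k) (hcont : ∀ i k, Continuous fun x => a x i k)
    (hsum : ∀ x k, Summable fun i => a x i k)
    (hpos : ∀ x ∈ K, ∀ s : ι → κ, 0 < ∑' i, a x i (s i)) :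
    ∃ m > 0, ∀ x ∈ K, ∀ s : ι → κ, m ≤ ∑' i, a x i (s i) := by
  let _ : TopologicalSpace κ := ⊥
  have : DiscreteTopology κ := ⟨rfl⟩
  have term_continuous (i : ι) : Continuous fun z : X × (ι → κ) => a z.1 i (z.2 i) :=
    (continuous_prod_of_discrete_right (f := fun z : X × κ => a z.1 i z.2)).mpr (hcont i) |>.comp
      (continuous_fst.prodMk ((continuous_apply i).comp continuous_snd))
  obtain ⟨m, hm, hmin⟩ :=
    exists_pos_forall_le_of_isCompact_of_lowerSemicontinuous
      (hK.prod (isCompact_univ (X := ι → κ)))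
      (lowerSemicontinuous_tsum_of_nonneg (fun i => (term_continuous i).lowerSemicontinuous)
        (fun i z => ha z.1 i (z.2 i)) fun z => summable_selection (ha z.1) (hsum z.1) z.2)
      fun z hz => hpos z.1 hz.1 z.2
  exact ⟨m, hm, fun x hx s => hmin (x, s) ⟨hx, mem_univ s⟩⟩

end LowerBounds

end Selections

section PFrames

variable {𝕜 E ι κ : Type*} [RCLike 𝕜] [NormedAddCommGroup E] [NormedSpace 𝕜 E] {p : ℝ}

variable (𝕜) in
/-- The family `w` in `E` is a `p`-frame for the dual of `E`, with bounds `A` and `B`. For `p = 2`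
and `E` a Hilbert space, where the functionals are the inner products with vectors, this is the
usual notion of a frame. If `0 < A`, the lower bound forces the series to converge, so `tsum` does
not take its junk value `0`. -/
def IsPFrameWithBounds (p A B : ℝ) (w : ι → E) : Prop :=
  ∀ f : StrongDual 𝕜 E,
    A * ‖f‖ ^ p ≤ ∑' i, ‖f (w i)‖ ^ p ∧ ∑' i, ‖f (w i)‖ ^ p ≤ B * ‖f‖ ^ p

theorem IsPFrameWithBounds.summable {A B : ℝ} {w : ι → E} (hw : IsPFrameWithBounds 𝕜 p A B w)
    (hp : p ≠ 0) (hA : 0 < A) (f : StrongDual 𝕜 E) : Summable fun i => ‖f (w i)‖ ^ p := by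
  rcases eq_or_ne f 0 with rfl | hf
  · simp [Real.zero_rpow hp, summable_zero]
  · by_contra hdiv
    have hlower := (hw f).1
    rw [tsum_eq_zero_of_not_summable hdiv] at hlower
    exact hlower.not_gt (by positivity)

theorem isPFrameWithBounds_two_iff {H : Type*} [NormedAddCommGroup H] [InnerProductSpace 𝕜 H]
    [CompleteSpace H] {A B : ℝ} {w : ι → H} :
    IsPFrameWithBounds 𝕜 2 A B w ↔ ∀ x : H,
      A * ‖x‖ ^ 2 ≤ ∑' i, ‖inner 𝕜 x (w i)‖ ^ 2 ∧ ∑' i, ‖inner 𝕜 x (w i)‖ ^ 2 ≤ B * ‖x‖ ^ 2 := by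
  simp only [IsPFrameWithBounds, (InnerProductSpace.toDual 𝕜 H).surjective.forall,
    LinearIsometryEquiv.norm_map, InnerProductSpace.toDual_apply_apply, Real.rpow_two]

theorem tsum_norm_smul_apply_rpow (c : 𝕜) (f : StrongDual 𝕜 E) (w : ι → E) :
    ∑' i, ‖(c • f) (w i)‖ ^ p = ‖c‖ ^ p * ∑' i, ‖f (w i)‖ ^ p := by
  simp only [smul_apply, norm_smul, ← tsum_mul_left,
    Real.mul_rpow (norm_nonneg _) (norm_nonneg _)]

theorem mul_norm_rpow_le_tsum_of_unit {m : ℝ} {w : ι → E} (hp : p ≠ 0)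
    (h : ∀ f : StrongDual 𝕜 E, ‖f‖ = 1 → m ≤ ∑' i, ‖f (w i)‖ ^ p) (f : StrongDual 𝕜 E) :
    m * ‖f‖ ^ p ≤ ∑' i, ‖f (w i)‖ ^ p := by
  rcases eq_or_ne f 0 with rfl | hf
  · simp [Real.zero_rpow hp]
  · have hunit := h _ (norm_smul_inv_norm (𝕜 := 𝕜) hf)
    rwa [tsum_norm_smul_apply_rpow, norm_inv, RCLike.norm_ofReal, abs_norm,
      Real.inv_rpow (norm_nonneg f), le_inv_mul_iff₀ (by positivity), mul_comm] at hunit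

theorem continuous_weakDual_norm_apply_rpow (hp : 0 ≤ p) (v : E) :
    Continuous fun f : WeakDual 𝕜 E => ‖f v‖ ^ p :=
  (WeakDual.eval_continuous v).norm.rpow_const fun _ => .inr hp

theorem exists_pos_forall_selection_lower_bound [Finite κ] (hp : 0 < p) {Φ : ι → κ → E}
    (hsum : ∀ (f : StrongDual 𝕜 E) k, Summable fun i => ‖f (Φ i k)‖ ^ p)
    (h : ∀ s : ι → κ, ∃ A > 0, ∀ f : StrongDual 𝕜 E,
      A * ‖f‖ ^ p ≤ ∑' i, ‖f (Φ i (s i))‖ ^ p) :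
    ∃ A > 0, ∀ (s : ι → κ) (f : StrongDual 𝕜 E),
      A * ‖f‖ ^ p ≤ ∑' i, ‖f (Φ i (s i))‖ ^ p := by
  rcases isEmpty_or_nonempty (ι → κ) with hempty | _
  · exact ⟨1, one_pos, fun s => isEmptyElim s⟩
  have terms_nonneg (f : StrongDual 𝕜 E) (i : ι) (k : κ) : 0 ≤ ‖f (Φ i k)‖ ^ p := by positivity
  obtain ⟨I, t, c, hc, hI⟩ :=
    exists_finset_lower_bound_add_sum terms_nonneg (fun f => by positivity) hsum h
  let K : Set (WeakDual 𝕜 E) :=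
    WeakDual.toStrongDual ⁻¹' Metric.closedBall 0 1 ∩ {f | c / 2 ≤ ∑ i ∈ I, ‖f (Φ i (t i))‖ ^ p}
  have isCompact_K : IsCompact K :=
    (WeakDual.isCompact_closedBall (0 : StrongDual 𝕜 E) 1).inter_right <|
      isClosed_le continuous_const <|
        continuous_finsetSum I fun i _ => continuous_weakDual_norm_apply_rpow hp.le (Φ i (t i))
  have zero_notMem_K : (0 : WeakDual 𝕜 E) ∉ K := fun hzero =>
    (half_pos hc).not_ge <| hzero.2.trans_eq <|
      Finset.sum_eq_zero fun i _ => by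
        rw [← WeakDual.toStrongDual_apply, map_zero, zero_apply, norm_zero, Real.zero_rpow hp.ne']
  have tsum_pos_on_K (f : WeakDual 𝕜 E) (hf : f ∈ K) (s : ι → κ) :
      0 < ∑' i, ‖f (Φ i (s i))‖ ^ p := by
    obtain ⟨A, hA, hs⟩ := h s
    have hf_ne : WeakDual.toStrongDual f ≠ 0 := fun hzero =>
      zero_notMem_K <| by rwa [← WeakDual.toStrongDual.map_eq_zero_iff.mp hzero]
    exact (by positivity : 0 < A * ‖WeakDual.toStrongDual f‖ ^ p).trans_le (hs _)
  obtain ⟨m, hm, hK⟩ := exists_pos_forall_le_tsum_selection_of_isCompact isCompact_K terms_nonneg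
    (fun i k => continuous_weakDual_norm_apply_rpow hp.le (Φ i k)) hsum tsum_pos_on_K
  refine ⟨min (c / 2) m, lt_min (half_pos hc) hm, fun s =>
    mul_norm_rpow_le_tsum_of_unit hp.ne' fun f hf => min_le_iff.mpr ?_⟩
  have hsplit := hI s f
  rw [hf, Real.one_rpow, mul_one] at hsplit
  rcases le_total (c / 2) (∑ i ∈ I, ‖f (Φ i (t i))‖ ^ p) with hlarge | hsmall
  · exact .inr (hK (StrongDual.toWeakDual f) ⟨by simp [hf], hlarge⟩ s)
  · exact .inl (by linarith)

theorem stmt_5_general [Finite κ] (hp : 0 < p) (Φ : ι → κ → E) :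
    (∃ A B : ℝ, 0 < A ∧ A ≤ B ∧ ∀ s : ι → κ, IsPFrameWithBounds 𝕜 p A B fun i => Φ i (s i)) ↔
      ∀ s : ι → κ, ∃ A B : ℝ, 0 < A ∧ A ≤ B ∧ IsPFrameWithBounds 𝕜 p A B fun i => Φ i (s i) := by
  refine ⟨fun ⟨A, B, hA, hAB, h⟩ s => ⟨A, B, hA, hAB, h s⟩, fun h => ?_⟩
  cases nonempty_fintype κ
  choose A B hA _ hframe using h
  have hsum (f : StrongDual 𝕜 E) (k : κ) : Summable fun i => ‖f (Φ i k)‖ ^ p :=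
    (hframe (const ι k)).summable hp.ne' (hA _) f
  obtain ⟨A₀, hA₀, hlower⟩ := exists_pos_forall_selection_lower_bound hp hsum
    fun s => ⟨A s, hA s, fun f => (hframe s f).1⟩
  refine ⟨A₀, max A₀ (∑ k, B (const ι k)), hA₀, le_max_left _ _, fun s f => ⟨hlower s f, ?_⟩⟩
  calc ∑' i, ‖f (Φ i (s i))‖ ^ p ≤ ∑ k, ∑' i, ‖f (Φ i k)‖ ^ p :=
        tsum_selection_le (fun i k => by positivity) (hsum f) s
    _ ≤ ∑ k, B (const ι k) * ‖f‖ ^ p := Finset.sum_le_sum fun k _ => (hframe (const ι k) f).2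
    _ = (∑ k, B (const ι k)) * ‖f‖ ^ p := (Finset.sum_mul ..).symm
    _ ≤ max A₀ (∑ k, B (const ι k)) * ‖f‖ ^ p := by gcongr; exact le_max_right _ _

end PFrames

/-- Two frames for a Hilbert space are woven if and only if they are weakly woven:
if every weaving is a frame, then universal frame bounds exist. -/
theorem stmt_5 {H : Type*} [NormedAddCommGroup H] [InnerProductSpace ℝ H]
    [CompleteSpace H] [TopologicalSpace.SeparableSpace H]
    (φ ψ : ℕ → H)
    (hφ : ∃ A B : ℝ, 0 < A ∧ A ≤ B ∧ ∀ x : H,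
      A * ‖x‖ ^ 2 ≤ (∑' i : ℕ, ⟪x, φ i⟫ ^ 2) ∧ (∑' i : ℕ, ⟪x, φ i⟫ ^ 2) ≤ B * ‖x‖ ^ 2)
    (hψ : ∃ A B : ℝ, 0 < A ∧ A ≤ B ∧ ∀ x : H,
      A * ‖x‖ ^ 2 ≤ (∑' i : ℕ, ⟪x, ψ i⟫ ^ 2) ∧ (∑' i : ℕ, ⟪x, ψ i⟫ ^ 2) ≤ B * ‖x‖ ^ 2) :
    (∃ A B : ℝ, 0 < A ∧ A ≤ B ∧ ∀ σ : Set ℕ, ∀ x : H,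
        A * ‖x‖ ^ 2 ≤ (∑' i : ℕ, ⟪x, if i ∈ σ then φ i else ψ i⟫ ^ 2) ∧
        (∑' i : ℕ, ⟪x, if i ∈ σ then φ i else ψ i⟫ ^ 2) ≤ B * ‖x‖ ^ 2) ↔
      (∀ σ : Set ℕ, ∃ A B : ℝ, 0 < A ∧ A ≤ B ∧ ∀ x : H,
        A * ‖x‖ ^ 2 ≤ (∑' i : ℕ, ⟪x, if i ∈ σ then φ i else ψ i⟫ ^ 2) ∧
        (∑' i : ℕ, ⟪x, if i ∈ σ then φ i else ψ i⟫ ^ 2) ≤ B * ‖x‖ ^ 2) := by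
  simpa only [isPFrameWithBounds_two_iff, Real.norm_eq_abs, sq_abs,
    (ofPred_bijective (α := ℕ)).surjective.forall, mem_ofPred_eq] using
    stmt_5_general (𝕜 := ℝ) two_pos fun i (fromφ : Prop) => if fromφ then φ i else ψ i
end

section
/- Suppose Φ = {φ_i}_{i=1}^∞ and Ψ = {ψ_i}_{i=1}^∞ are Riesz bases for a Hilbert space H and there is a uniform constant A > 0 such that for every σ ⊆ ℕ, the family {φ_i}_{i∈σ} ∪ {ψ_i}_{i∈σ^c} is a frame with lower frame bound A. Then for every σ ⊆ ℕ, the family {φ_i}_{i∈σ} ∪ {ψ_i}_{i∈σ^c} is a Riesz basis for H. -/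
open scoped RealInnerProductSpace BigOperators Classical

/-!
A family is a Riesz basis once it is a frame that is *minimal*, i.e. has a biorthogonal system of
continuous functionals: a functional `ℓ` with `ℓ (f i) = conj (c i)` satisfies
`A ‖ℓ‖² ≤ ∑ |c i|² = ℓ (∑ c i • f i)`, which turns the lower frame bound into a lower Riesz bound
with the same constant. Minimality survives the exchange of a single vector as long as the new
family is still complete, so every weaving along a *finite* set is minimal. A lower Riesz bound
involves only finitely many indices at a time; since the constant `A` is the same for all finite
weavings, the bound passes to arbitrary ones.

In an incomplete space a biorthogonal system of vectors need not exist, so functionals take its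
place; the frame inequality extends to them because the functionals `⟪x, ·⟫` are dense in the dual.
-/

section NormedSpace

variable {𝕜 E ι : Type*} [RCLike 𝕜] [NormedAddCommGroup E] [NormedSpace 𝕜 E]

variable (𝕜) in
/-- Minimality of a family, in the form of a biorthogonal system of continuous functionals. By
Hahn–Banach this says that no `f i` lies in the closed span of the others. -/
def IsMinimalFamily (f : ι → E) : Prop :=
  ∀ i, ∃ ℓ : StrongDual 𝕜 E, ℓ (f i) = 1 ∧ ∀ k ≠ i, ℓ (f k) = 0

variable (𝕜) in
/-- The lower half of the Riesz sequence inequalities. -/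
def HasLowerRieszBound (f : ι → E) (C : ℝ) : Prop :=
  ∀ c : ι →₀ 𝕜, C * ∑ i ∈ c.support, ‖c i‖ ^ 2 ≤ ‖∑ i ∈ c.support, c i • f i‖ ^ 2

variable (𝕜) in
/-- The upper half of the Riesz sequence inequalities. -/
def HasUpperRieszBound (f : ι → E) (D : ℝ) : Prop :=
  ∀ c : ι →₀ 𝕜, ‖∑ i ∈ c.support, c i • f i‖ ^ 2 ≤ D * ∑ i ∈ c.support, ‖c i‖ ^ 2

variable (𝕜) in
/-- A Riesz basis with bounds `C` and `D`, encoded as a complete Riesz sequence. -/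
structure IsRieszBasis (f : ι → E) (C D : ℝ) : Prop where
  pos : 0 < C
  lower : HasLowerRieszBound 𝕜 f C
  upper : HasUpperRieszBound 𝕜 f D
  dense_span : Dense (Submodule.span 𝕜 (Set.range f) : Set E)

theorem dense_of_forall_strongDual_eq_zero (M : Submodule 𝕜 E)
    (h : ∀ ℓ : StrongDual 𝕜 E, (∀ x ∈ M, ℓ x = 0) → ℓ = 0) : Dense (M : Set E) := by
  rw [Submodule.dense_iff_topologicalClosure_eq_top, Submodule.eq_top_iff']
  by_contra! hne
  obtain ⟨x, hx⟩ := hne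
  have : IsClosed (M.topologicalClosure : Set E) := M.isClosed_topologicalClosure
  have hx0 : M.topologicalClosure.mkQL x ≠ 0 := fun h0 =>
    hx ((Submodule.Quotient.mk_eq_zero _).1 h0)
  obtain ⟨q, hq⟩ := SeparatingDual.exists_ne_zero (R := 𝕜) hx0
  have hℓ : q ∘L M.topologicalClosure.mkQL = 0 := h _ fun y hy => by
    have hy0 : M.topologicalClosure.mkQL y = 0 :=
      (Submodule.Quotient.mk_eq_zero _).2 (M.le_topologicalClosure hy)
    rw [ContinuousLinearMap.comp_apply, hy0, map_zero]
  exact hq (DFunLike.congr_fun hℓ x)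

variable {f : ι → E} {C : ℝ}

theorem HasLowerRieszBound.mul_norm_coeff_sq_le (hf : HasLowerRieszBound 𝕜 f C) (hC : 0 ≤ C)
    (c : ι →₀ 𝕜) (i : ι) : C * ‖c i‖ ^ 2 ≤ ‖Finsupp.linearCombination 𝕜 f c‖ ^ 2 := by
  have hi : ‖c i‖ ^ 2 ≤ ∑ k ∈ c.support, ‖c k‖ ^ 2 := by
    by_cases hi : i ∈ c.support
    · exact Finset.single_le_sum (f := fun k => ‖c k‖ ^ 2) (fun _ _ => sq_nonneg _) hi
    · rw [Finsupp.notMem_support_iff.1 hi, norm_zero, zero_pow two_ne_zero]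
      positivity
  exact (mul_le_mul_of_nonneg_left hi hC).trans (hf c)

theorem HasLowerRieszBound.linearIndependent (hf : HasLowerRieszBound 𝕜 f C) (hC : 0 < C) :
    LinearIndependent 𝕜 f := by
  refine linearIndependent_iff.2 fun c hc => Finsupp.ext fun i => ?_
  have hi := hf.mul_norm_coeff_sq_le hC.le c i
  rw [hc, norm_zero, zero_pow two_ne_zero] at hi
  simpa using nonpos_of_mul_nonpos_right hi hC

theorem HasLowerRieszBound.isMinimalFamily (hf : HasLowerRieszBound 𝕜 f C) (hC : 0 < C) :
    IsMinimalFamily 𝕜 f := by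
  -- The coordinate functionals on the span are bounded, hence extend by Hahn–Banach.
  intro i
  have hli := hf.linearIndependent hC
  let coord : Submodule.span 𝕜 (Set.range f) →ₗ[𝕜] 𝕜 := Finsupp.lapply i ∘ₗ hli.repr
  have hcoord (x : Submodule.span 𝕜 (Set.range f)) : ‖coord x‖ ≤ (√C)⁻¹ * ‖x‖ := by
    have hx := hf.mul_norm_coeff_sq_le hC.le (hli.repr x) i
    rw [hli.linearCombination_repr] at hx
    rw [inv_mul_eq_div, le_div_iff₀' (Real.sqrt_pos.2 hC)]
    refine le_of_sq_le_sq ?_ (norm_nonneg _)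
    rwa [mul_pow, Real.sq_sqrt hC.le]
  obtain ⟨ℓ, hℓ, -⟩ := exists_extension_norm_eq _ (coord.mkContinuous _ hcoord)
  have hℓf (k : ι) : ℓ (f k) = Finsupp.single k 1 i := by
    rw [← hli.repr_eq_single k ⟨f k, Submodule.subset_span ⟨k, rfl⟩⟩ rfl]
    exact hℓ ⟨f k, _⟩
  exact ⟨ℓ, by simp [hℓf], fun k hk => by simp [hℓf, hk]⟩

theorem IsMinimalFamily.exists_forall_apply_eq (hf : IsMinimalFamily 𝕜 f) (a : ι →₀ 𝕜) :
    ∃ ℓ : StrongDual 𝕜 E, ∀ k, ℓ (f k) = a k := by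
  choose g hg_self hg_ne using hf
  refine ⟨∑ i ∈ a.support, a i • g i, fun k => ?_⟩
  simp only [sum_apply, smul_apply, smul_eq_mul]
  rw [Finset.sum_eq_single k (fun i _ hik => by rw [hg_ne i k hik.symm, mul_zero])
    (fun hk => by rw [Finsupp.notMem_support_iff.1 hk, zero_mul]), hg_self, mul_one]

theorem IsMinimalFamily.update (hf : IsMinimalFamily 𝕜 f) {j : ι} {v : E}
    (hdense : Dense (Submodule.span 𝕜 (Set.range (Function.update f j v)) : Set E)) :
    IsMinimalFamily 𝕜 (Function.update f j v) := by
  -- Completeness of the new family forces the functional `g` dual to `f j` not to vanish at `v`;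
  -- multiples of `g` then correct the biorthogonal system.
  obtain ⟨g, hg_self, hg_ne⟩ := hf j
  have hgv : g v ≠ 0 := by
    intro hgv
    have hg : g = 0 := by
      refine ContinuousLinearMap.ext_on hdense ?_
      rintro _ ⟨k, rfl⟩
      rcases eq_or_ne k j with rfl | hk
      · simpa using hgv
      · simpa [hk] using hg_ne k hk
    simp [hg] at hg_self
  intro i
  rcases eq_or_ne i j with rfl | hij
  · exact ⟨(g v)⁻¹ • g, by simp [hgv], fun k hk => by simp [hk, hg_ne k hk]⟩
  · obtain ⟨h, hh_self, hh_ne⟩ := hf i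
    refine ⟨h - (h v / g v) • g, by simp [hij, hh_self, hg_ne i hij], fun k hk => ?_⟩
    rcases eq_or_ne k j with rfl | hkj
    · simp [hgv]
    · simp [hkj, hh_ne k hk, hg_ne k hkj]

variable {φ ψ : ι → E}

theorem IsMinimalFamily.piecewise_finset (hψ : IsMinimalFamily 𝕜 ψ)
    (hdense : ∀ s : Finset ι, Dense (Submodule.span 𝕜 (Set.range (s.piecewise φ ψ)) : Set E))
    (s : Finset ι) : IsMinimalFamily 𝕜 (s.piecewise φ ψ) := by
  induction s using Finset.induction_on with
  | empty => simpa only [Finset.piecewise_empty] using hψ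
  | insert j s _ ih =>
    have hdense_insert := hdense (insert j s)
    rw [Finset.piecewise_insert] at hdense_insert ⊢
    exact ih.update hdense_insert

theorem HasLowerRieszBound.piecewise
    (h : ∀ s : Finset ι, HasLowerRieszBound 𝕜 (s.piecewise φ ψ) C) (σ : Set ι) :
    HasLowerRieszBound 𝕜 (σ.piecewise φ ψ) C := by
  intro c
  have hsum : ∑ i ∈ c.support, c i • σ.piecewise φ ψ i =
      ∑ i ∈ c.support, c i • {i ∈ c.support | i ∈ σ}.piecewise φ ψ i :=
    Finset.sum_congr rfl fun i hi => by
      simp only [Set.piecewise, Finset.piecewise, Finset.mem_filter, hi, true_and]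
  rw [hsum]
  exact h _ c

end NormedSpace

section InnerProductSpace

variable {𝕜 E ι : Type*} [RCLike 𝕜] [NormedAddCommGroup E] [InnerProductSpace 𝕜 E]

variable (𝕜) in
/-- Bessel families with bound `B`. The inequality is stated for finite partial sums, so that no
summability assumption is needed. -/
structure IsBessel (f : ι → E) (B : ℝ) : Prop where
  nonneg : 0 ≤ B
  sum_le : ∀ (x : E) (s : Finset ι), ∑ i ∈ s, ‖inner 𝕜 x (f i)‖ ^ 2 ≤ B * ‖x‖ ^ 2

variable (𝕜) in
/-- Frames with lower bound `A` and upper bound `B`. -/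
structure IsFrame (f : ι → E) (A B : ℝ) : Prop extends IsBessel 𝕜 f B where
  pos : 0 < A
  le_tsum : ∀ x : E, A * ‖x‖ ^ 2 ≤ ∑' i, ‖inner 𝕜 x (f i)‖ ^ 2

theorem denseRange_toDualMap : DenseRange (InnerProductSpace.toDualMap 𝕜 E) := by
  let coe : E →L[𝕜] UniformSpace.Completion E := UniformSpace.Completion.toComplL
  let restrict : UniformSpace.Completion E → StrongDual 𝕜 E :=
    fun z => InnerProductSpace.toDual 𝕜 _ z ∘L coe
  have hcont : Continuous restrict := by fun_prop
  have hsurj : Function.Surjective restrict := fun ℓ => by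
    refine ⟨(InnerProductSpace.toDual 𝕜 _).symm (ℓ.extend coe), ?_⟩
    ext x
    simp only [restrict, LinearIsometryEquiv.apply_symm_apply, ContinuousLinearMap.comp_apply]
    exact ℓ.extend_eq UniformSpace.Completion.denseRange_coe
      (UniformSpace.Completion.isUniformInducing_coe E) x
  have hcomp : InnerProductSpace.toDualMap 𝕜 E = restrict ∘ coe := by
    funext x
    ext y
    exact (UniformSpace.Completion.inner_coe x y).symm
  rw [hcomp]
  exact hsurj.denseRange.comp UniformSpace.Completion.denseRange_coe hcont

variable {f : ι → E} {A B : ℝ}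

theorem IsBessel.summable (hf : IsBessel 𝕜 f B) (x : E) :
    Summable fun i => ‖inner 𝕜 x (f i)‖ ^ 2 :=
  summable_of_sum_le (fun _ => sq_nonneg _) (hf.sum_le x)

theorem IsBessel.sum_norm_apply_sq_le (hf : IsBessel 𝕜 f B) (ℓ : StrongDual 𝕜 E) (s : Finset ι) :
    ∑ i ∈ s, ‖ℓ (f i)‖ ^ 2 ≤ B * ‖ℓ‖ ^ 2 := by
  refine denseRange_toDualMap.induction_on ℓ (isClosed_le (by fun_prop) (by fun_prop)) fun x => ?_
  simpa only [InnerProductSpace.toDualMap_apply_apply, LinearIsometry.norm_map]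
    using hf.sum_le x s

theorem IsBessel.hasUpperRieszBound (hf : IsBessel 𝕜 f B) : HasUpperRieszBound 𝕜 f B := by
  -- Cauchy–Schwarz for `‖w‖² = ∑ c i * ⟪w, f i⟫`, where `w = ∑ c i • f i`.
  intro c
  set w := ∑ i ∈ c.support, c i • f i with hw
  have hinner : ‖w‖ ^ 2 ≤ ∑ i ∈ c.support, ‖c i‖ * ‖inner 𝕜 w (f i)‖ := by
    calc ‖w‖ ^ 2 = ‖inner 𝕜 w w‖ := by rw [inner_self_eq_norm_sq_to_K]; simp
      _ = ‖∑ i ∈ c.support, c i * inner 𝕜 w (f i)‖ := by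
        conv_lhs => rw [hw, inner_sum, ← hw]
        simp only [inner_smul_right]
      _ ≤ ∑ i ∈ c.support, ‖c i‖ * ‖inner 𝕜 w (f i)‖ := by
        simpa only [norm_mul] using norm_sum_le c.support fun i => c i * inner 𝕜 w (f i)
  have hsq : ‖w‖ ^ 2 * ‖w‖ ^ 2 ≤ (B * ∑ i ∈ c.support, ‖c i‖ ^ 2) * ‖w‖ ^ 2 := by
    calc ‖w‖ ^ 2 * ‖w‖ ^ 2 ≤ (∑ i ∈ c.support, ‖c i‖ * ‖inner 𝕜 w (f i)‖) ^ 2 := by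
          rw [← sq]; gcongr
      _ ≤ (∑ i ∈ c.support, ‖c i‖ ^ 2) * ∑ i ∈ c.support, ‖inner 𝕜 w (f i)‖ ^ 2 :=
        Finset.sum_mul_sq_le_sq_mul_sq _ _ _
      _ ≤ (∑ i ∈ c.support, ‖c i‖ ^ 2) * (B * ‖w‖ ^ 2) := by gcongr; exact hf.sum_le w _
      _ = (B * ∑ i ∈ c.support, ‖c i‖ ^ 2) * ‖w‖ ^ 2 := by ring
  rcases (sq_nonneg ‖w‖).eq_or_lt with hw0 | hw0
  · rw [← hw0]
    have := hf.nonneg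
    positivity
  · exact le_of_mul_le_mul_right hsq hw0

theorem IsFrame.mul_norm_sq_le_sum (hf : IsFrame 𝕜 f A B) {ℓ : StrongDual 𝕜 E} {s : Finset ι}
    (hℓ : ∀ i ∉ s, ℓ (f i) = 0) : A * ‖ℓ‖ ^ 2 ≤ ∑ i ∈ s, ‖ℓ (f i)‖ ^ 2 := by
  -- For `x : E` the part of the frame sum outside `s` only sees the difference `⟪x, ·⟫ - ℓ`, so the
  -- Bessel bound makes it negligible as `⟪x, ·⟫` approaches `ℓ`.
  have happrox (m : StrongDual 𝕜 E) :
      A * ‖m‖ ^ 2 ≤ ∑ i ∈ s, ‖m (f i)‖ ^ 2 + B * ‖m - ℓ‖ ^ 2 := by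
    refine denseRange_toDualMap.induction_on m (isClosed_le (by fun_prop) (by fun_prop))
      fun x => ?_
    set d := InnerProductSpace.toDualMap 𝕜 E x with hd
    rw [hd, LinearIsometry.norm_map, ← hd]
    refine (hf.le_tsum x).trans ((hf.summable x).tsum_le_of_sum_le fun t => ?_)
    calc ∑ i ∈ t, ‖d (f i)‖ ^ 2
        ≤ ∑ i ∈ s ∪ t \ s, ‖d (f i)‖ ^ 2 :=
          Finset.sum_le_sum_of_subset_of_nonneg (by simp) fun _ _ _ => sq_nonneg _
      _ = ∑ i ∈ s, ‖d (f i)‖ ^ 2 + ∑ i ∈ t \ s, ‖(d - ℓ) (f i)‖ ^ 2 := by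
          rw [Finset.sum_union Finset.disjoint_sdiff]
          congr 1
          refine Finset.sum_congr rfl fun i hi => ?_
          rw [sub_apply, hℓ i (Finset.mem_sdiff.1 hi).2, sub_zero]
      _ ≤ ∑ i ∈ s, ‖d (f i)‖ ^ 2 + B * ‖d - ℓ‖ ^ 2 := by
          gcongr
          exact hf.sum_norm_apply_sq_le _ _
  simpa using happrox ℓ

theorem IsFrame.dense_span (hf : IsFrame 𝕜 f A B) :
    Dense (Submodule.span 𝕜 (Set.range f) : Set E) := by
  refine dense_of_forall_strongDual_eq_zero _ fun ℓ hℓ => ?_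
  have hle : A * ‖ℓ‖ ^ 2 ≤ 0 := by
    simpa using hf.mul_norm_sq_le_sum (s := ∅) fun i _ => hℓ _ (Submodule.subset_span ⟨i, rfl⟩)
  simpa using nonpos_of_mul_nonpos_right hle hf.pos

theorem IsFrame.hasLowerRieszBound (hf : IsFrame 𝕜 f A B) (hmin : IsMinimalFamily 𝕜 f) :
    HasLowerRieszBound 𝕜 f A := by
  intro c
  set w := ∑ i ∈ c.support, c i • f i with hw
  set N := ∑ i ∈ c.support, ‖c i‖ ^ 2 with hN
  obtain ⟨ℓ, hℓ⟩ := hmin.exists_forall_apply_eq (c.mapRange star (star_zero 𝕜))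
  simp only [Finsupp.mapRange_apply] at hℓ
  have hℓ_norm : A * ‖ℓ‖ ^ 2 ≤ N := by
    simpa only [hℓ, norm_star] using hf.mul_norm_sq_le_sum (ℓ := ℓ) (s := c.support)
      fun i hi => by rw [hℓ, Finsupp.notMem_support_iff.1 hi, star_zero]
  have hℓw : ℓ w = N := by
    simp [hw, hN, hℓ, RCLike.mul_conj]
  have hNle : N ≤ ‖ℓ‖ * ‖w‖ := by
    calc N ≤ ‖ℓ w‖ := by rw [hℓw, RCLike.norm_ofReal]; exact le_abs_self N
      _ ≤ ‖ℓ‖ * ‖w‖ := ℓ.le_opNorm w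
  have hN0 : 0 ≤ N := by positivity
  rcases hN0.eq_or_lt with hN0 | hN0
  · rw [← hN0, mul_zero]
    positivity
  · refine le_of_mul_le_mul_right ?_ hN0
    calc A * N * N = A * N ^ 2 := by ring
      _ ≤ A * (‖ℓ‖ * ‖w‖) ^ 2 := by gcongr; exact hf.pos.le
      _ = A * ‖ℓ‖ ^ 2 * ‖w‖ ^ 2 := by ring
      _ ≤ N * ‖w‖ ^ 2 := by gcongr
      _ = ‖w‖ ^ 2 * N := mul_comm _ _

theorem isFrame_of_le_tsum_of_tsum_le (hA : 0 < A) (hB : 0 ≤ B)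
    (hlower : ∀ x, A * ‖x‖ ^ 2 ≤ ∑' i, ‖inner 𝕜 x (f i)‖ ^ 2)
    (hupper : ∀ x, ∑' i, ‖inner 𝕜 x (f i)‖ ^ 2 ≤ B * ‖x‖ ^ 2) : IsFrame 𝕜 f A B := by
  -- With the convention that divergent sums are `0`, the lower bound itself forces summability.
  have hsummable (x : E) : Summable fun i => ‖inner 𝕜 x (f i)‖ ^ 2 := by
    by_contra hx
    have hle := hlower x
    rw [tsum_eq_zero_of_not_summable hx] at hle
    obtain rfl : x = 0 := by simpa using nonpos_of_mul_nonpos_right hle hA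
    exact hx (by simp)
  exact
    { nonneg := hB
      sum_le := fun x s =>
        ((hsummable x).sum_le_tsum s fun _ _ => sq_nonneg _).trans (hupper x)
      pos := hA
      le_tsum := hlower }

theorem stmt_9_general {φ ψ : ι → E} {B : Set ι → ℝ} (hψ : IsMinimalFamily 𝕜 ψ)
    (hframe : ∀ σ : Set ι, IsFrame 𝕜 (σ.piecewise φ ψ) A (B σ)) (σ : Set ι) :
    IsRieszBasis 𝕜 (σ.piecewise φ ψ) A (B σ) := by
  have hframe_finset (s : Finset ι) : IsFrame 𝕜 (s.piecewise φ ψ) A (B s) := by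
    convert hframe s using 1
    ext i
    simp only [Set.piecewise, Finset.piecewise, Finset.mem_coe]
  have hmin := hψ.piecewise_finset fun s => (hframe_finset s).dense_span
  exact
    { pos := (hframe σ).pos
      lower := .piecewise (fun s => (hframe_finset s).hasLowerRieszBound (hmin s)) σ
      upper := (hframe σ).hasUpperRieszBound
      dense_span := (hframe σ).dense_span }

end InnerProductSpace

/-- If `φ` and `ψ` are Riesz bases and every weaving is a frame with uniform
lower frame bound `A`, then every weaving is in fact a Riesz basis for `H`. -/
theorem stmt_9 {H : Type*} [NormedAddCommGroup H] [InnerProductSpace ℝ H]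
    (φ ψ : ℕ → H) (A : ℝ) (hA : 0 < A)
    (hφRiesz : ∃ A' B' : ℝ, 0 < A' ∧ A' ≤ B' ∧ ∀ c : ℕ →₀ ℝ,
      A' * (∑ i ∈ c.support, (c i) ^ 2) ≤ ‖∑ i ∈ c.support, c i • φ i‖ ^ 2 ∧
      ‖∑ i ∈ c.support, c i • φ i‖ ^ 2 ≤ B' * (∑ i ∈ c.support, (c i) ^ 2))
    (hφdense : Dense (Submodule.span ℝ (Set.range φ) : Set H))
    (hψRiesz : ∃ A' B' : ℝ, 0 < A' ∧ A' ≤ B' ∧ ∀ c : ℕ →₀ ℝ,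
      A' * (∑ i ∈ c.support, (c i) ^ 2) ≤ ‖∑ i ∈ c.support, c i • ψ i‖ ^ 2 ∧
      ‖∑ i ∈ c.support, c i • ψ i‖ ^ 2 ≤ B' * (∑ i ∈ c.support, (c i) ^ 2))
    (hψdense : Dense (Submodule.span ℝ (Set.range ψ) : Set H))
    (hlower : ∀ σ : Set ℕ, ∀ x : H,
      A * ‖x‖ ^ 2 ≤ ∑' i : ℕ, ⟪x, if i ∈ σ then φ i else ψ i⟫ ^ 2)
    (hupper : ∀ σ : Set ℕ, ∃ B : ℝ, 0 < B ∧ ∀ x : H,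
      (∑' i : ℕ, ⟪x, if i ∈ σ then φ i else ψ i⟫ ^ 2) ≤ B * ‖x‖ ^ 2) :
    ∀ σ : Set ℕ,
      (∃ C D : ℝ, 0 < C ∧ C ≤ D ∧ ∀ c : ℕ →₀ ℝ,
        C * (∑ i ∈ c.support, (c i) ^ 2) ≤
          ‖∑ i ∈ c.support, c i • (if i ∈ σ then φ i else ψ i)‖ ^ 2 ∧
        ‖∑ i ∈ c.support, c i • (if i ∈ σ then φ i else ψ i)‖ ^ 2 ≤
          D * (∑ i ∈ c.support, (c i) ^ 2)) ∧
      Dense (Submodule.span ℝ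
        (Set.range fun i : ℕ => if i ∈ σ then φ i else ψ i) : Set H) := by
  obtain ⟨C, _, hC, _, hψ⟩ := hψRiesz
  choose B hB hupper using hupper
  have hψmin : IsMinimalFamily ℝ ψ :=
    HasLowerRieszBound.isMinimalFamily (C := C)
      (fun c => by simpa only [Real.norm_eq_abs, sq_abs] using (hψ c).1) hC
  have hframe (σ : Set ℕ) : IsFrame ℝ (σ.piecewise φ ψ) A (B σ) :=
    isFrame_of_le_tsum_of_tsum_le hA (hB σ).le
      (by simpa only [Real.norm_eq_abs, sq_abs, Set.piecewise] using hlower σ)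
      (by simpa only [Real.norm_eq_abs, sq_abs, Set.piecewise] using hupper σ)
  intro σ
  obtain ⟨hpos, hlow, hupp, hdense⟩ := stmt_9_general hψmin hframe σ
  simp only [HasLowerRieszBound, HasUpperRieszBound, Real.norm_eq_abs, sq_abs] at hlow hupp
  refine ⟨⟨A, max A (B σ), hpos, le_max_left _ _, fun c => ⟨hlow c, (hupp c).trans ?_⟩⟩, hdense⟩
  gcongr
  exact le_max_right _ _
end
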